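/- arXiv:1507.01283 — 2 statements merged into one kernel-verified Lean document; each statement's English description precedes it below -/
import Mathlib

section
/- For every integer n ≥ 1 and every prime power q, the cardinality of Res_n(F_q) equals Σ_d ϕ(n/d) · q^{n−1+d}, where the sum ranges over all divisors d of n such that n/d divides q−1. -/
open Polynomial

/-- The resultant `Res(φ, ψ)` of a monic polynomial `φ` and a polynomial `ψ`, computed
(inside the algebraic closure) as the product `∏ ψ(αᵢ)` over the roots `αᵢ` of `φ`,
counted with multiplicity. -/
noncomputable def resultantAC {k : Type*} [Field k] (φ ψ : k[X]) : AlgebraicClosure k :=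
  (((φ.map (algebraMap k (AlgebraicClosure k))).roots).map
    fun α => (ψ.map (algebraMap k (AlgebraicClosure k))).eval α).prod

/-- `Res_n(k)`: the set of pairs `(φ, ψ)` of monic degree-`n` polynomials over `k`
with `Res(φ, ψ) = 1`. -/
def ResPairs (k : Type*) [Field k] (n : ℕ) : Set (k[X] × k[X]) :=
  {p | p.1.Monic ∧ p.1.natDegree = n ∧ p.2.Monic ∧ p.2.natDegree = n ∧
    resultantAC p.1 p.2 = 1}


section Res
variable {k : Type*} [Field k]

noncomputable def RR (φ r : k[X]) : k := resultant φ r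

lemma RR_AC (φ r : k[X]) (h : φ.Monic) :
    algebraMap k (AlgebraicClosure k) (RR φ r) = resultantAC φ r := by
  have := resultant_eq_prod_eval (φ.map (algebraMap k (AlgebraicClosure k)))
    (r.map (algebraMap k (AlgebraicClosure k))) r.natDegree (by simp) (IsAlgClosed.splits _)
  rw [natDegree_map, resultant_map_map, (h.map _).leadingCoeff, one_pow, one_mul] at this
  exact this

lemma AC_mul_left (φ ψ r : k[X]) (h : φ.Monic) (h' : ψ.Monic) :
    resultantAC (φ * ψ) r = resultantAC φ r * resultantAC ψ r := by
  have : (φ * ψ).map (algebraMap k (AlgebraicClosure k)) ≠ 0 := ((h.mul h').map _).ne_zero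
  rw [Polynomial.map_mul] at this
  simp [resultantAC, roots_mul this]

lemma AC_mul_right (φ r s : k[X]) :
    resultantAC φ (r * s) = resultantAC φ r * resultantAC φ s := by
  simp [resultantAC, Multiset.prod_map_mul]

lemma AC_congr (φ r s : k[X]) (h : φ ∣ r - s) :
    resultantAC φ r = resultantAC φ s := by
  obtain ⟨c, hc⟩ := h
  obtain rfl : r = s + φ * c := by rw [← hc]; ring
  unfold resultantAC
  congr 1
  apply Multiset.map_congr rfl
  intro x hx
  have := isRoot_of_mem_roots hx
  rw [IsRoot] at this
  simp [this]

lemma AC_eq_zero (φ r : k[X]) (h : φ.Monic) :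
    resultantAC φ r ≠ 0 ↔ IsCoprime φ r := by
  constructor
  · intro h0
    by_contra hc
    apply h0
    obtain ⟨p, hp, h1, h2⟩ : ∃ p : k[X], Irreducible p ∧ p ∣ φ ∧ p ∣ r := by
      by_contra hcon
      push Not at hcon
      exact hc (isCoprime_of_irreducible_dvd (by simp [h.ne_zero]) (fun z hz h1 h2 => hcon z hz h1 h2))
    obtain ⟨x, hx⟩ := IsAlgClosed.exists_aeval_eq_zero (AlgebraicClosure k) p
      (by have := hp.natDegree_pos; rw [degree_eq_natDegree hp.ne_zero]; exact_mod_cast this.ne')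
    unfold resultantAC
    apply Multiset.prod_eq_zero
    rw [Multiset.mem_map]
    refine ⟨x, ?_, ?_⟩
    · rw [mem_roots (h.map _).ne_zero, IsRoot, eval_map_algebraMap]
      obtain ⟨c, rfl⟩ := h1; simp [hx]
    · rw [eval_map_algebraMap]
      obtain ⟨c, rfl⟩ := h2; simp [hx]
  · rintro ⟨a, b, hab⟩ h0
    unfold resultantAC at h0
    rw [Multiset.prod_eq_zero_iff, Multiset.mem_map] at h0
    obtain ⟨x, hx, hx'⟩ := h0
    have h1 := isRoot_of_mem_roots hx
    rw [IsRoot, eval_map_algebraMap] at h1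
    rw [eval_map_algebraMap] at hx'
    have := congrArg (aeval x) hab
    simp [h1, hx'] at this

lemma RR_mul_left (φ ψ r : k[X]) (h : φ.Monic) (h' : ψ.Monic) :
    RR (φ * ψ) r = RR φ r * RR ψ r := by
  apply (algebraMap k (AlgebraicClosure k)).injective
  rw [map_mul, RR_AC _ _ h, RR_AC _ _ h', RR_AC _ _ (h.mul h'), AC_mul_left _ _ _ h h']

lemma RR_one_left (r : k[X]) : RR 1 r = 1 := by
  apply (algebraMap k (AlgebraicClosure k)).injective
  rw [RR_AC _ _ monic_one]; simp [resultantAC]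

lemma RR_pow_left (φ r : k[X]) (h : φ.Monic) (m : ℕ) :
    RR (φ ^ m) r = RR φ r ^ m := by
  induction m with
  | zero => simp [RR_one_left]
  | succ m ih => rw [pow_succ, RR_mul_left _ _ _ (h.pow m) h, ih, pow_succ]

lemma RR_mul_right (φ r s : k[X]) (h : φ.Monic) : RR φ (r * s) = RR φ r * RR φ s := by
  apply (algebraMap k (AlgebraicClosure k)).injective
  rw [map_mul]; simp only [RR_AC _ _ h, AC_mul_right]

lemma RR_one_right (φ : k[X]) (h : φ.Monic) : RR φ 1 = 1 := by
  apply (algebraMap k (AlgebraicClosure k)).injective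
  rw [RR_AC _ _ h]; simp [resultantAC]

lemma RR_congr (φ r s : k[X]) (h : φ.Monic) (hd : φ ∣ r - s) : RR φ r = RR φ s := by
  apply (algebraMap k (AlgebraicClosure k)).injective
  simp only [RR_AC _ _ h]
  exact AC_congr _ _ _ hd

lemma RR_ne_zero (φ r : k[X]) (h : φ.Monic) : RR φ r ≠ 0 ↔ IsCoprime φ r := by
  rw [← AC_eq_zero _ _ h, ← RR_AC _ _ h]
  simp

lemma RR_norm [Finite k] (p r : k[X]) (hm : p.Monic) (hp : Irreducible p) :
    RR p r = Algebra.norm k (AdjoinRoot.mk p r) := by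
  have : Fact (Irreducible p) := ⟨hp⟩
  have hfd : FiniteDimensional k (AdjoinRoot p) := (AdjoinRoot.powerBasis hp.ne_zero).finite
  apply (algebraMap k (AlgebraicClosure k)).injective
  rw [RR_AC _ _ hm, Algebra.norm_eq_prod_embeddings]
  have hsep : p.Separable := PerfectField.separable_of_irreducible hp
  have hnd : (p.map (algebraMap k (AlgebraicClosure k))).roots.Nodup :=
    nodup_roots (hsep.map)
  classical
  unfold resultantAC
  rw [← Finset.prod_mk _ hnd] 
  symm
  refine Finset.prod_bij (fun σ _ => σ (AdjoinRoot.root p)) ?_ ?_ ?_ ?_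
  · intro σ _
    simp only [Finset.mem_mk]
    rw [mem_roots (hm.map _).ne_zero, IsRoot, eval_map_algebraMap, aeval_algHom_apply]
    simp
  · intro σ _ τ _ h
    exact AdjoinRoot.algHom_ext h
  · intro x hx
    simp only [Finset.mem_mk] at hx
    rw [mem_roots (hm.map _).ne_zero, IsRoot, eval_map_algebraMap] at hx
    exact ⟨AdjoinRoot.liftAlgHom p (Algebra.ofId _ _) x hx, Finset.mem_univ _,
      AdjoinRoot.liftAlgHom_root _ _ _ hx⟩
  · intro σ _
    rw [eval_map_algebraMap, aeval_algHom_apply, AdjoinRoot.aeval_eq]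

/-- The hom. -/
noncomputable def NN (φ : k[X]) (h : φ.Monic) : AdjoinRoot φ →* k where
  toFun u := RR φ (AdjoinRoot.mk_surjective u).choose
  map_one' := by
    rw [← RR_one_right φ h]
    apply RR_congr _ _ _ h
    rw [← AdjoinRoot.mk_eq_mk, (AdjoinRoot.mk_surjective (1 : AdjoinRoot φ)).choose_spec, map_one]
  map_mul' u v := by
    rw [← RR_mul_right _ _ _ h]
    apply RR_congr _ _ _ h
    rw [← AdjoinRoot.mk_eq_mk, map_mul]
    simp only [(AdjoinRoot.mk_surjective _).choose_spec]

lemma NN_mk (φ : k[X]) (h : φ.Monic) (r : k[X]) : NN φ h (AdjoinRoot.mk φ r) = RR φ r := by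
  apply RR_congr _ _ _ h
  rw [← AdjoinRoot.mk_eq_mk]
  simp only [(AdjoinRoot.mk_surjective _).choose_spec]

lemma isUnit_mk (φ r : k[X]) : IsUnit (AdjoinRoot.mk φ r) ↔ IsCoprime φ r := by
  constructor
  · intro h
    obtain ⟨b, hb⟩ := isUnit_iff_exists_inv.1 h
    obtain ⟨s, rfl⟩ := AdjoinRoot.mk_surjective b
    rw [← map_mul, ← map_one (AdjoinRoot.mk φ), AdjoinRoot.mk_eq_mk] at hb
    obtain ⟨c, hc⟩ := hb
    exact ⟨-c, s, by linear_combination hc⟩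
  · rintro ⟨a, b, hab⟩
    apply IsUnit.of_mul_eq_one (AdjoinRoot.mk φ b)
    have := congrArg (AdjoinRoot.mk φ) hab
    rw [mul_comm]
    simpa using this

lemma mk_bij (φ : k[X]) (h : φ.Monic) :
    Set.BijOn (AdjoinRoot.mk φ) {r | r.degree < φ.natDegree} Set.univ := by
  refine ⟨fun _ _ => trivial, ?_, ?_⟩
  · intro r hr s hs hrs
    rw [AdjoinRoot.mk_eq_mk] at hrs
    rw [← sub_eq_zero]
    apply eq_zero_of_dvd_of_degree_lt hrs
    rw [degree_eq_natDegree h.ne_zero]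
    exact lt_of_le_of_lt (degree_sub_le _ _) (max_lt hr hs)
  · intro u _
    obtain ⟨r, rfl⟩ := AdjoinRoot.mk_surjective u
    refine ⟨r %ₘ φ, ?_, ?_⟩
    · simp only [Set.mem_ofPred_eq]
      rw [← degree_eq_natDegree h.ne_zero]
      exact degree_modByMonic_lt _ h
    · rw [AdjoinRoot.mk_eq_mk]
      refine ⟨- (r /ₘ φ), ?_⟩
      have := modByMonic_add_div r φ
      linear_combination this

end Res

section Pow
set_option linter.unusedSectionVars false
variable {F : Type*} [Field F] [Fintype F]

lemma RR_crt (A B a b : F[X]) (hA : A.Monic) (hB : B.Monic) (h : IsCoprime A B) :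
    ∃ r, RR (A * B) r = RR A a * RR B b ∧ RR A r = RR A a ∧ RR B r = RR B b := by
  obtain ⟨u, v, huv⟩ := h
  have h1 : RR A (a * (v * B) + b * (u * A)) = RR A a := by
    apply RR_congr _ _ _ hA
    exact ⟨u * (b - a), by linear_combination a * huv⟩
  have h2 : RR B (a * (v * B) + b * (u * A)) = RR B b := by
    apply RR_congr _ _ _ hB
    exact ⟨v * (a - b), by linear_combination b * huv⟩
  exact ⟨_, by rw [RR_mul_left _ _ _ hA hB, h1, h2], h1, h2⟩

lemma exists_norm (p : F[X]) (hm : p.Monic) (hp : Irreducible p) (z : F) :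
    ∃ v, RR p v = z := by
  have : Fact (Irreducible p) := ⟨hp⟩
  have hfd : FiniteDimensional F (AdjoinRoot p) := (AdjoinRoot.powerBasis hp.ne_zero).finite
  have : Finite (AdjoinRoot p) := Module.finite_of_finite F
  obtain ⟨u, hu⟩ := FiniteField.norm_surjective F (AdjoinRoot p) z
  obtain ⟨v, rfl⟩ := AdjoinRoot.mk_surjective u
  exact ⟨v, by rw [RR_norm _ _ hm hp, hu]⟩

lemma pow_of_kills (m : ℕ) (hm : m ∣ Fintype.card F - 1) (N : ℕ) :
    ∀ φ : F[X], φ.natDegree ≤ N → φ.Monic →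
    (∀ r, IsCoprime φ r → RR φ r ^ ((Fintype.card F - 1) / m) = 1) →
    ∃ g : F[X], g.Monic ∧ φ = g ^ m := by
  classical
  have hq : 0 < Fintype.card F - 1 := by
    have := Fintype.one_lt_card (α := F); omega
  have hm0 : 0 < m := Nat.pos_of_dvd_of_pos hm hq
  induction N with
  | zero =>
    intro φ hd hφ _
    exact ⟨1, monic_one, by rw [one_pow]; exact hφ.natDegree_eq_zero.1 (by omega)⟩
  | succ N ih =>
    intro φ hd hφ hk
    by_cases h1 : φ = 1
    · exact ⟨1, monic_one, by simpa using h1⟩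
    obtain ⟨p, hpm, hp, hpd⟩ := exists_monic_irreducible_factor φ
      (fun hu => h1 (hφ.isUnit_iff.1 hu))
    have hfin : FiniteMultiplicity p φ := FiniteMultiplicity.of_not_isUnit hp.not_isUnit hφ.ne_zero
    obtain ⟨ψ, hψ, hnd⟩ := hfin.exists_eq_pow_mul_and_not_dvd
    set e := multiplicity p φ with he
    have he0 : e ≠ 0 := by
      intro h0
      rw [h0, pow_zero, one_mul] at hψ
      exact hnd (hψ ▸ hpd)
    have hψm : ψ.Monic := by
      rw [hψ] at hφ
      exact (hpm.pow e).of_mul_monic_left hφ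
    have hcop : IsCoprime p ψ := (hp.coprime_iff_not_dvd).2 hnd
    have hcop' : IsCoprime (p ^ e) ψ := hcop.pow_left
    have hpe := hpm.pow e
    have key : ∀ a b, RR (p ^ e) a ≠ 0 → RR ψ b ≠ 0 →
        (RR (p ^ e) a * RR ψ b) ^ ((Fintype.card F - 1) / m) = 1 := by
      intro a b ha hb
      obtain ⟨r, hr, -, -⟩ := RR_crt (p ^ e) ψ a b hpe hψm hcop'
      rw [← hr, ← hψ]
      apply hk
      rw [← RR_ne_zero _ _ hφ, hψ, hr]
      exact mul_ne_zero ha hb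
    obtain ⟨g, hg, hgψ⟩ := ih ψ (by
        have := congrArg natDegree hψ
        rw [hpe.natDegree_mul hψm, hpm.natDegree_pow] at this
        have h3 := hp.natDegree_pos
        have : 0 < e * p.natDegree := Nat.mul_pos (by omega) h3
        omega) hψm (by
        intro r hr
        have := key 1 r (by simp [RR_one_right _ hpe]) ((RR_ne_zero _ _ hψm).2 hr)
        simpa [RR_one_right _ hpe] using this)
    have hme : m ∣ e := by
      obtain ⟨z, hz⟩ := IsCyclic.exists_generator (α := Fˣ)
      obtain ⟨v, hv⟩ := exists_norm p hpm hp z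
      have := key v 1 (by rw [RR_pow_left _ _ hpm, hv]; simp) (by simp [RR_one_right _ hψm])
      rw [RR_pow_left _ _ hpm, hv, RR_one_right _ hψm, mul_one, ← pow_mul] at this
      have h4 : z ^ (e * ((Fintype.card F - 1) / m)) = 1 := by
        ext; simpa using this
      have h5 := orderOf_dvd_of_pow_eq_one h4
      rw [orderOf_eq_card_of_forall_mem_zpowers hz, Nat.card_eq_fintype_card,
        Fintype.card_units] at h5
      obtain ⟨c, hc⟩ := hm
      rw [hc, Nat.mul_div_cancel_left _ hm0] at h5
      have hc0 : 0 < c := by rcases Nat.eq_zero_or_pos c with h | h; · simp [h] at hc; omega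
                             · exact h
      exact Nat.dvd_of_mul_dvd_mul_right hc0 h5
    obtain ⟨c, hc⟩ := hme
    refine ⟨p ^ c * g, (hpm.pow c).mul hg, ?_⟩
    rw [hψ, mul_pow, ← pow_mul, ← hgψ, mul_comm c m, ← hc]

lemma kills_iff (m : ℕ) (hm : m ∣ Fintype.card F - 1) (φ : F[X]) (hφ : φ.Monic) :
    (∀ r, IsCoprime φ r → RR φ r ^ ((Fintype.card F - 1) / m) = 1) ↔
    ∃ g : F[X], g.Monic ∧ φ = g ^ m := by
  refine ⟨pow_of_kills m hm _ φ le_rfl hφ, ?_⟩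
  rintro ⟨g, hg, rfl⟩ r hr
  have h0 := (RR_ne_zero _ _ hφ).2 hr
  have hm0 : m ≠ 0 := by
    rintro rfl
    have := Fintype.one_lt_card (α := F)
    rw [zero_dvd_iff] at hm
    omega
  rw [RR_pow_left _ _ hg] at h0 ⊢
  rw [← pow_mul, Nat.mul_div_cancel' hm]
  exact FiniteField.pow_card_sub_one_eq_one _ (fun h => h0 (by simp [h, hm0]))

lemma ker_count (φ : F[X]) (hφ : φ.Monic) :
    Set.ncard {r : F[X] | r.degree < φ.natDegree ∧ RR φ r = 1} =
      Nat.card (Units.map (NN φ hφ)).ker := by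
  rw [← Nat.card_coe_set_eq]
  have hb := mk_bij φ hφ
  refine Nat.card_congr (Equiv.ofBijective (fun r => ⟨(isUnit_mk φ r.1).2 ((RR_ne_zero _ _ hφ).1
    (by rw [r.2.2]; exact one_ne_zero)) |>.unit, ?_⟩) ⟨?_, ?_⟩)
  · rw [MonoidHom.mem_ker]; ext
    simp [NN_mk, r.2.2]
  · intro r s hrs
    have := congrArg (fun x => (x.1 : AdjoinRoot φ)) hrs
    exact Subtype.ext (hb.2.1 r.2.1 s.2.1 this)
  · rintro ⟨u, hu⟩
    obtain ⟨r, hr, hru⟩ := hb.2.2 (Set.mem_univ (u : AdjoinRoot φ))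
    refine ⟨⟨r, hr, ?_⟩, ?_⟩
    · rw [MonoidHom.mem_ker] at hu
      have := congrArg Units.val hu
      rw [Units.coe_map, ← hru] at this
      simpa [NN_mk] using this
    · apply Subtype.ext; ext; exact hru

lemma unit_count (φ : F[X]) (hφ : φ.Monic) :
    Set.ncard {r : F[X] | r.degree < φ.natDegree ∧ IsCoprime φ r} =
      Nat.card (AdjoinRoot φ)ˣ := by
  rw [← Nat.card_coe_set_eq]
  have hb := mk_bij φ hφ
  refine Nat.card_congr (Equiv.ofBijective (fun r => ((isUnit_mk φ r.1).2 r.2.2).unit) ⟨?_, ?_⟩)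
  · intro r s hrs
    have := congrArg (fun x : (AdjoinRoot φ)ˣ => (x : AdjoinRoot φ)) hrs
    exact Subtype.ext (hb.2.1 r.2.1 s.2.1 this)
  · intro u
    obtain ⟨r, hr, hru⟩ := hb.2.2 (Set.mem_univ (u : AdjoinRoot φ))
    refine ⟨⟨r, hr, ?_⟩, ?_⟩
    · rw [← isUnit_mk, hru]; exact u.isUnit
    · ext; exact hru

open Classical in
lemma perphi (φ : F[X]) (hφ : φ.Monic) :
    (Fintype.card F - 1) * Set.ncard {r : F[X] | r.degree < φ.natDegree ∧ RR φ r = 1} =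
    Set.ncard {r : F[X] | r.degree < φ.natDegree ∧ IsCoprime φ r} *
      ∑ m ∈ (Fintype.card F - 1).divisors,
        if ∃ g : F[X], g.Monic ∧ φ = g ^ m then Nat.totient m else 0 := by
  rw [ker_count φ hφ, unit_count φ hφ]
  have hq : 0 < Fintype.card F - 1 := by
    have := Fintype.one_lt_card (α := F); omega
  set f := Units.map (NN φ hφ) with hf
  have e1 : Nat.card (AdjoinRoot φ)ˣ = Nat.card f.range * Nat.card f.ker := by
    rw [Subgroup.card_eq_card_quotient_mul_card_subgroup f.ker,
      Nat.card_congr (QuotientGroup.quotientKerEquivRange f).toEquiv]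
  have hU : Nat.card Fˣ = Fintype.card F - 1 := by
    rw [Nat.card_eq_fintype_card, Fintype.card_units]
  have e2 : Nat.card f.range ∣ Fintype.card F - 1 := hU ▸ Subgroup.card_subgroup_dvd_card _
  obtain ⟨i, hi⟩ := e2
  have hi0 : i ≠ 0 := by rintro rfl; omega
  have hR0 : Nat.card f.range ≠ 0 := by intro h; rw [h] at hi; omega
  have e3 : ∀ m ∈ (Fintype.card F - 1).divisors,
      ((∃ g : F[X], g.Monic ∧ φ = g ^ m) ↔ m ∣ i) := by
    intro m hm
    have hm' := Nat.dvd_of_mem_divisors hm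
    have hm0 : 0 < m := Nat.pos_of_dvd_of_pos hm' hq
    rw [← kills_iff m hm' φ hφ]
    have s1 : (∀ r, IsCoprime φ r → RR φ r ^ ((Fintype.card F - 1) / m) = 1) ↔
        ∀ x : f.range, x ^ ((Fintype.card F - 1) / m) = 1 := by
      constructor
      · rintro h ⟨x, u, rfl⟩
        obtain ⟨r, hr⟩ := AdjoinRoot.mk_surjective (u : AdjoinRoot φ)
        have := h r (by rw [← isUnit_mk, hr]; exact u.isUnit)
        apply Subtype.ext; ext
        simpa [hf, ← hr, NN_mk] using this
      · intro h r hr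
        have := h ⟨f ((isUnit_mk φ r).2 hr).unit, _, rfl⟩
        have := congrArg (fun x => ((x : f.range).1 : F)) this
        simpa [hf, NN_mk] using this
    rw [s1, ← Monoid.exponent_dvd_iff_forall_pow_eq_one, IsCyclic.exponent_eq_card]
    obtain ⟨c, hc⟩ := hm'
    rw [hc, Nat.mul_div_cancel_left _ hm0]
    rw [hc] at hi
    have hc0 : c ≠ 0 := by rintro rfl; omega
    constructor
    · rintro ⟨d, hd⟩
      refine ⟨d, ?_⟩
      apply Nat.eq_of_mul_eq_mul_left (Nat.pos_of_ne_zero hR0)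
      rw [← hi, hd]; ring
    · rintro ⟨d, hd⟩
      refine ⟨d, ?_⟩
      apply Nat.eq_of_mul_eq_mul_left hm0
      rw [hi, hd]; ring
  rw [Finset.sum_congr rfl (fun m hm => by rw [if_congr (e3 m hm) rfl rfl])]
  rw [← Finset.sum_filter]
  have : (Fintype.card F - 1).divisors.filter (fun m => m ∣ i) = i.divisors := by
    ext m
    simp only [Finset.mem_filter, Nat.mem_divisors]
    constructor
    · rintro ⟨_, h⟩; exact ⟨h, hi0⟩
    · rintro ⟨h, _⟩; exact ⟨⟨hi ▸ h.mul_left _, hq.ne'⟩, h⟩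
  rw [this, Nat.sum_totient, e1]
  conv_lhs => rw [hi]
  ring

end Pow

section Count
variable {F : Type*} [Field F] [Fintype F]
set_option linter.unusedSectionVars false

def monS (F : Type*) [Field F] (d : ℕ) : Set F[X] := {g | g.Monic ∧ g.natDegree = d}
def ltS (F : Type*) [Field F] (n : ℕ) : Set F[X] := {g | g.degree < n}
def copP (F : Type*) [Field F] (d n : ℕ) : Set (F[X] × F[X]) :=
  {x | x.1 ∈ monS F d ∧ x.2 ∈ ltS F n ∧ IsCoprime x.1 x.2}

noncomputable def ltE (n : ℕ) : ltS F n ≃ (Fin n → F) :=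
  (Equiv.subtypeEquivRight (fun p => by rw [mem_degreeLT]; rfl)).trans (degreeLTEquiv F n).toEquiv

noncomputable def monE (n : ℕ) : monS F n ≃ (Fin n → F) :=
  (monicEquivDegreeLT n).trans (degreeLTEquiv F n).toEquiv

instance (n : ℕ) : Finite (ltS F n) := Finite.of_equiv _ (ltE n).symm
instance (n : ℕ) : Finite (monS F n) := Finite.of_equiv _ (monE n).symm

lemma card_ltS (n : ℕ) : Nat.card (ltS F n) = Fintype.card F ^ n := by
  rw [Nat.card_congr (ltE n)]; simp

lemma card_monS (n : ℕ) : Nat.card (monS F n) = Fintype.card F ^ n := by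
  rw [Nat.card_congr (monE n)]; simp

instance (d n : ℕ) : Finite (copP F d n) := by
  apply Set.Finite.to_subtype
  apply Set.Finite.subset ((Set.toFinite (monS F d)).prod (Set.toFinite (ltS F n)))
  rintro x ⟨h1, h2, _⟩
  exact ⟨h1, h2⟩

lemma degree_mul_lt (c b : F[X]) (hc : c.Monic) (n : ℕ) (h : c.natDegree ≤ n) :
    (c * b).degree < n ↔ b.degree < (n - c.natDegree : ℕ) := by
  by_cases hb : b = 0
  · simp [hb]
  · rw [degree_eq_natDegree (mul_ne_zero hc.ne_zero hb), degree_eq_natDegree hb,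
      natDegree_mul hc.ne_zero hb]
    norm_cast
    omega

lemma total (d n : ℕ) (hdn : d ≤ n) :
    Fintype.card F ^ (d + n) =
      ∑ k ∈ Finset.range (d + 1), Fintype.card F ^ k * Nat.card (copP F (d - k) (n - k)) := by
  have hb : Nat.card (Σ k : Fin (d + 1), monS F k × copP F (d - k) (n - k)) =
      Nat.card (monS F d × ltS F n) := by
    refine Nat.card_congr (Equiv.ofBijective (fun x => ⟨⟨x.2.1.1 * x.2.2.1.1, ?_⟩,
      ⟨x.2.1.1 * x.2.2.1.2, ?_⟩⟩) ⟨?_, ?_⟩)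
    · obtain ⟨k, ⟨c, hc, hck⟩, ⟨⟨a, b⟩, ⟨ha, hak⟩, hb, hab⟩⟩ := x
      refine ⟨hc.mul ha, ?_⟩
      have := k.2
      dsimp only at *
      rw [hc.natDegree_mul ha]
      omega
    · obtain ⟨k, ⟨c, hc, hck⟩, ⟨⟨a, b⟩, ⟨ha, hak⟩, hb, hab⟩⟩ := x
      have := k.2
      dsimp only at *
      change (c * b).degree < n
      rw [degree_mul_lt _ _ hc _ (by omega), hck]
      exact hb
    · rintro ⟨k, ⟨c, hc, hck⟩, ⟨⟨a, b⟩, ⟨ha, hak⟩, hb, hab⟩⟩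
        ⟨k', ⟨c', hc', hck'⟩, ⟨⟨a', b'⟩, ⟨ha', hak'⟩, hb', hab'⟩⟩ h
      simp only [Prod.mk.injEq, Subtype.mk.injEq] at h
      obtain ⟨h1, h2⟩ := h
      have d1 : c ∣ c' := by
        obtain ⟨u, v, huv⟩ := hab'
        exact ⟨u * a + v * b, by linear_combination (-c') * huv - u * h1 - v * h2⟩
      have d2 : c' ∣ c := by
        obtain ⟨u, v, huv⟩ := hab
        exact ⟨u * a' + v * b', by linear_combination (-c) * huv + u * h1 + v * h2⟩
      obtain rfl : c = c' := eq_of_monic_of_associated hc hc' (associated_of_dvd_dvd d1 d2)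
      obtain rfl : k = k' := Fin.ext (hck.symm.trans hck')
      obtain rfl := mul_left_cancel₀ hc.ne_zero h1
      obtain rfl := mul_left_cancel₀ hc.ne_zero h2
      rfl
    · rintro ⟨⟨g, hg, hgd⟩, ⟨r, hr⟩⟩
      classical
      have hg0 := hg.ne_zero
      obtain ⟨c, hc, ⟨a, ha⟩, ⟨b, hb⟩, u, v, huv⟩ : ∃ c : F[X], c.Monic ∧ c ∣ g ∧ c ∣ r ∧
          ∃ u v, c = u * g + v * r := by
        have h0 : EuclideanDomain.gcd g r ≠ 0 := by
          intro h; exact hg0 (EuclideanDomain.gcd_eq_zero_iff.1 h).1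
        refine ⟨normalize (EuclideanDomain.gcd g r), monic_normalize h0,
          normalize_dvd_iff.2 (EuclideanDomain.gcd_dvd_left _ _),
          normalize_dvd_iff.2 (EuclideanDomain.gcd_dvd_right _ _), ?_⟩
        obtain ⟨w, hw⟩ := dvd_normalize_iff.2 (dvd_refl (EuclideanDomain.gcd g r))
        refine ⟨EuclideanDomain.gcdA g r * w, EuclideanDomain.gcdB g r * w, ?_⟩
        rw [hw]
        conv_lhs => rw [EuclideanDomain.gcd_eq_gcd_ab]
        ring
      have ham : a.Monic := hc.of_mul_monic_left (ha ▸ hg)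
      have hdeg : c.natDegree + a.natDegree = d := by
        rw [← hc.natDegree_mul ham, ← ha, hgd]
      refine ⟨⟨⟨c.natDegree, by omega⟩, ⟨c, hc, rfl⟩, ⟨(a, b), ⟨ham, ?_⟩, ?_, ?_⟩⟩, ?_⟩
      · dsimp only; omega
      · have hr' : r.degree < n := hr
        rw [hb, degree_mul_lt _ _ hc _ (by omega)] at hr'
        exact hr'
      · refine ⟨u, v, mul_left_cancel₀ hc.ne_zero ?_⟩
        dsimp only
        conv_rhs => rw [mul_one, huv, ha, hb]
        ring
      · simp [← ha, ← hb]
  rw [Nat.card_prod, card_monS, card_ltS, ← pow_add, Nat.card_sigma] at hb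
  rw [← hb, Finset.sum_range]
  simp only [Nat.card_prod, card_monS]

lemma card_cop (d n : ℕ) (hd : 1 ≤ d) (hdn : d ≤ n) :
    Nat.card (copP F d n) = (Fintype.card F - 1) * Fintype.card F ^ (n - 1 + d) := by
  obtain ⟨d, rfl⟩ : ∃ e, d = e + 1 := ⟨d - 1, by omega⟩
  obtain ⟨n, rfl⟩ : ∃ e, n = e + 1 := ⟨n - 1, by omega⟩
  have h1 := total (F := F) (d + 1) (n + 1) hdn
  have h2 := total (F := F) d n (by omega)
  rw [Finset.sum_range_succ'] at h1
  simp only [Nat.add_sub_add_right, pow_succ', mul_assoc] at h1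
  rw [← Finset.mul_sum, ← h2] at h1
  simp only [pow_zero, one_mul, Nat.sub_zero] at h1
  rw [Nat.sub_mul]
  apply Nat.eq_sub_of_add_eq
  rw [Nat.add_sub_cancel, one_mul]
  have e1 : n + (d + 1) = (d + n) + 1 := by ring
  have e2 : d + 1 + (n + 1) = (d + n) + 1 + 1 := by ring
  rw [e2, pow_succ', pow_succ'] at h1
  rw [e1, pow_succ', h1, add_comm]

lemma card_cop_sum (d n : ℕ) :
    Nat.card (copP F d n) = ∑ g ∈ (Set.toFinite (monS F d)).toFinset,
      Set.ncard {r : F[X] | r.degree < n ∧ IsCoprime g r} := by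
  have e : Nat.card (copP F d n) = Nat.card (Σ g : monS F d, {r : F[X] | r.degree < n ∧ IsCoprime g.1 r}) := by
    refine Nat.card_congr ⟨fun x => ⟨⟨x.1.1, x.2.1⟩, ⟨x.1.2, x.2.2⟩⟩,
      fun x => ⟨(x.1.1, x.2.1), x.1.2, x.2.2⟩, fun _ => rfl, fun _ => rfl⟩
  have hf : ∀ g : monS F d, Finite {r : F[X] | r.degree < n ∧ IsCoprime g.1 r} := fun g =>
    (Set.Finite.subset (Set.toFinite (ltS F n)) (fun r hr => hr.1)).to_subtype
  have := Fintype.ofFinite (monS F d)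
  rw [e, Nat.card_sigma]
  simp only [Nat.card_coe_set_eq]
  rw [← Finset.sum_subtype (f := fun g : F[X] => Set.ncard {r : F[X] | r.degree < n ∧ IsCoprime g r})]
  simp

lemma card_res (n : ℕ) :
    Nat.card (ResPairs F n) = ∑ g ∈ (Set.toFinite (monS F n)).toFinset,
      Set.ncard {r : F[X] | r.degree < g.natDegree ∧ RR g r = 1} := by
  have e : Nat.card (ResPairs F n) =
      Nat.card (Σ g : monS F n, {r : F[X] | r.degree < g.1.natDegree ∧ RR g.1 r = 1}) := by
    have key : ∀ g ψ : F[X], g.Monic → (resultantAC g ψ = 1 ↔ RR g (ψ - g) = 1) := by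
      intro g ψ hg
      rw [← RR_AC _ _ hg, RR_congr g (ψ - g) ψ hg ⟨-1, by ring⟩]
      rw [← map_one (algebraMap F (AlgebraicClosure F))]
      exact (algebraMap F (AlgebraicClosure F)).injective.eq_iff
    refine Nat.card_congr ⟨fun x => ⟨⟨x.1.1, x.2.1, x.2.2.1⟩, ⟨x.1.2 - x.1.1, ?_, ?_⟩⟩,
      fun x => ⟨(x.1.1, x.2.1 + x.1.1), x.1.2.1, x.1.2.2, ?_, ?_, ?_⟩, ?_, ?_⟩
    · obtain ⟨⟨g, ψ⟩, hg, hgn, hψ, hψn, h⟩ := x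
      dsimp only at *
      rw [← degree_eq_natDegree hg.ne_zero]
      have hdeg : ψ.degree = g.degree := by
        rw [degree_eq_natDegree hg.ne_zero, degree_eq_natDegree hψ.ne_zero, hgn, hψn]
      exact hdeg ▸ degree_sub_lt_left hdeg hψ.ne_zero (by rw [hg.leadingCoeff, hψ.leadingCoeff])
    · exact (key _ _ x.2.1).1 x.2.2.2.2.2
    · obtain ⟨⟨g, hg, hgn⟩, r, hr, h⟩ := x
      dsimp only at *
      rw [← degree_eq_natDegree hg.ne_zero] at hr
      exact hg.add_of_right hr
    · obtain ⟨⟨g, hg, hgn⟩, r, hr, h⟩ := x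
      dsimp only at *
      rw [← degree_eq_natDegree hg.ne_zero] at hr
      rw [natDegree_add_eq_right_of_degree_lt hr, hgn]
    · rw [key _ _ x.1.2.1]
      simpa using x.2.2.2
    · intro x; simp
    · rintro ⟨⟨g, hg, hgn⟩, r, hr, h⟩
      simp
  have hf : ∀ g : monS F n, Finite {r : F[X] | r.degree < g.1.natDegree ∧ RR g.1 r = 1} := fun g =>
    (Set.Finite.subset (Set.toFinite (ltS F g.1.natDegree)) (fun r hr => hr.1)).to_subtype
  have := Fintype.ofFinite (monS F n)
  rw [e, Nat.card_sigma]
  simp only [Nat.card_coe_set_eq]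
  rw [← Finset.sum_subtype (f := fun g : F[X] => Set.ncard {r : F[X] | r.degree < g.natDegree ∧ RR g r = 1})]
  simp

open Classical in
lemma inner_count (n m : ℕ) (hn : 1 ≤ n) (hm : 0 < m) :
    ∑ φ ∈ (Set.toFinite (monS F n)).toFinset,
      Set.ncard {r : F[X] | r.degree < φ.natDegree ∧ IsCoprime φ r} *
        (if ∃ g : F[X], g.Monic ∧ φ = g ^ m then Nat.totient m else 0) =
    if m ∣ n then
      (Fintype.card F - 1) * (Nat.totient m * Fintype.card F ^ (n - 1 + n / m)) else 0 := by
  split_ifs with hmn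
  · obtain ⟨d, rfl⟩ := hmn
    rw [Nat.mul_div_cancel_left _ hm]
    have hd : 1 ≤ d := by rcases d with _ | d; · simp at hn
                          · omega
    rw [← mul_left_comm, ← card_cop d (m * d) hd (Nat.le_mul_of_pos_left _ hm), card_cop_sum, Finset.mul_sum]
    simp only [mul_ite, mul_zero]
    rw [← Finset.sum_filter]
    symm
    refine Finset.sum_bij (fun g _ => g ^ m) ?_ ?_ ?_ ?_
    · intro g hg
      simp only [Set.Finite.mem_toFinset, Finset.mem_filter] at hg ⊢
      exact ⟨⟨hg.1.pow m, by rw [hg.1.natDegree_pow, hg.2]⟩, g, hg.1, rfl⟩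
    · intro g hg h hh hgh
      simp only [Set.Finite.mem_toFinset] at hg hh
      refine eq_of_monic_of_associated hg.1 hh.1 (associated_of_dvd_dvd ?_ ?_)
      · exact (IsIntegrallyClosed.pow_dvd_pow_iff hm.ne').1 hgh.dvd
      · exact (IsIntegrallyClosed.pow_dvd_pow_iff hm.ne').1 hgh.symm.dvd
    · intro φ hφ
      simp only [Set.Finite.mem_toFinset, Finset.mem_filter] at hφ
      obtain ⟨⟨h1, h2⟩, g, hg, rfl⟩ := hφ
      refine ⟨g, ?_, rfl⟩
      rw [Set.Finite.mem_toFinset]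
      rw [hg.natDegree_pow] at h2
      exact ⟨hg, Nat.eq_of_mul_eq_mul_left hm h2⟩
    · intro g hg
      simp only [Set.Finite.mem_toFinset] at hg
      rw [mul_comm, hg.1.natDegree_pow, hg.2]
      simp only [IsCoprime.pow_left_iff hm]
  · apply Finset.sum_eq_zero
    intro φ hφ
    simp only [Set.Finite.mem_toFinset] at hφ
    rw [if_neg, mul_zero]
    rintro ⟨g, hg, rfl⟩
    apply hmn
    rw [← hφ.2, hg.natDegree_pow]
    exact dvd_mul_right _ _

end Count

/-- `|Res_n(F_q)| = Σ_{d ∣ n, (n/d) ∣ (q-1)} ϕ(n/d) · q^{n-1+d}`. -/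
theorem stmt_2 (F : Type*) [Field F] [Fintype F] (q : ℕ) (hq : Fintype.card F = q)
    (n : ℕ) (hn : 1 ≤ n) :
    Nat.card (ResPairs F n) =
      ∑ d ∈ n.divisors, if (n / d) ∣ (q - 1) then Nat.totient (n / d) * q ^ (n - 1 + d) else 0 := by
  classical
  subst hq
  have hq : 0 < Fintype.card F - 1 := by
    have := Fintype.one_lt_card (α := F); omega
  apply Nat.eq_of_mul_eq_mul_left hq
  rw [card_res, Finset.mul_sum]
  rw [Finset.sum_congr rfl (fun g hg => perphi g ((Set.Finite.mem_toFinset _).1 hg).1)]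
  simp only [Finset.mul_sum]
  rw [Finset.sum_comm]
  rw [Finset.sum_congr rfl (fun m hm => inner_count n m hn (Nat.pos_of_mem_divisors hm))]
  rw [← Nat.sum_div_divisors n (fun d => (Fintype.card F - 1) * if (n / d) ∣ (Fintype.card F - 1) then
    Nat.totient (n / d) * Fintype.card F ^ (n - 1 + d) else 0)]
  have : ∀ m ∈ n.divisors, ((Fintype.card F - 1) * if (n / (n / m)) ∣ (Fintype.card F - 1) then
    Nat.totient (n / (n / m)) * Fintype.card F ^ (n - 1 + n / m) else 0) =
    if m ∣ (Fintype.card F - 1) then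
      (Fintype.card F - 1) * (Nat.totient m * Fintype.card F ^ (n - 1 + n / m)) else 0 := by
    intro m hm
    rw [Nat.div_div_self (Nat.dvd_of_mem_divisors hm) (by omega), mul_ite, mul_zero]
  rw [Finset.sum_congr rfl this, ← Finset.sum_filter, ← Finset.sum_filter]
  apply Finset.sum_congr _ (fun _ _ => rfl)
  ext m
  simp only [Finset.mem_filter, Nat.mem_divisors]
  have : n ≠ 0 := by omega
  have := hq.ne'
  tauto
end

section
/- Let n be a prime number and let q be a prime power with q ≡ 1 (mod n). Then the cardinality of Res_n(F_q) equals q^{2n−1} + (n−1)·q^n. -/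
open Polynomial

section helpers
variable {F : Type*} [Field F]

lemma algebraMap_resultant_eq {φ : F[X]} (hφ : φ.Monic) (f : F[X]) :
    algebraMap F (AlgebraicClosure F) (resultant φ f) = resultantAC φ f := by
  unfold resultantAC
  have h := resultant_eq_prod_eval (φ.map (algebraMap F (AlgebraicClosure F)))
    (f.map (algebraMap F (AlgebraicClosure F))) f.natDegree (by simp) (IsAlgClosed.splits _)
  rw [(hφ.map _).leadingCoeff, one_pow, one_mul] at h
  rw [← h, resultant_map_map]
  simp

lemma rAC_mul (φ f g : F[X]) : resultantAC φ (f * g) = resultantAC φ f * resultantAC φ g := by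
  simp [resultantAC, Multiset.prod_map_mul]

lemma rAC_C {φ : F[X]} (hφ : φ.Monic) (c : F) :
    resultantAC φ (C c) = algebraMap F _ (c ^ φ.natDegree) := by
  rw [← algebraMap_resultant_eq hφ]
  simp

lemma rAC_pow (φ f : F[X]) (m : ℕ) : resultantAC φ (f ^ m) = resultantAC φ f ^ m := by
  simp [resultantAC, Multiset.prod_map_pow]

lemma rAC_add_mul (φ f g : F[X]) : resultantAC φ (f + φ * g) = resultantAC φ f := by
  unfold resultantAC
  congr 1
  apply Multiset.map_congr rfl
  intro a ha
  have := (mem_roots'.mp ha).2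
  simp only [Polynomial.map_add, Polynomial.map_mul, eval_add, eval_mul, this.eq_zero]
  simp

lemma rAC_mod (φ f : F[X]) : resultantAC φ (f %ₘ φ) = resultantAC φ f := by
  conv_rhs => rw [← modByMonic_add_div f φ]
  rw [rAC_add_mul]

lemma rAC_congr {φ f g : F[X]} (h : φ ∣ f - g) : resultantAC φ f = resultantAC φ g := by
  obtain ⟨k, hk⟩ := h
  rw [show f = g + φ * k by rw [← hk]; ring, rAC_add_mul]

lemma rAC_mul_left {φ₁ φ₂ : F[X]} (h1 : φ₁ ≠ 0) (h2 : φ₂ ≠ 0) (f : F[X]) :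
    resultantAC (φ₁ * φ₂) f = resultantAC φ₁ f * resultantAC φ₂ f := by
  unfold resultantAC
  rw [Polynomial.map_mul, roots_mul, Multiset.map_add, Multiset.prod_add]
  exact mul_ne_zero ((Polynomial.map_ne_zero_iff (algebraMap F (AlgebraicClosure F)).injective).2 h1)
    ((Polynomial.map_ne_zero_iff (algebraMap F (AlgebraicClosure F)).injective).2 h2)

lemma rAC_pow_left (φ : F[X]) (m : ℕ) (f : F[X]) :
    resultantAC (φ ^ m) f = resultantAC φ f ^ m := by
  unfold resultantAC
  rw [Polynomial.map_pow, roots_pow, Multiset.map_nsmul, Multiset.prod_nsmul]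

lemma rAC_ne_zero {φ : F[X]} (hφ : φ.Monic) (f : F[X]) :
    resultantAC φ f ≠ 0 ↔ IsCoprime φ f := by
  rw [← algebraMap_resultant_eq hφ, ← isUnit_resultant_iff_isCoprime hφ, isUnit_iff_ne_zero]
  simp

lemma rAC_X_sub_C_pow (a : F) (m : ℕ) (f : F[X]) :
    resultantAC ((X - C a) ^ m) f = algebraMap F _ (f.eval a ^ m) := by
  rw [rAC_pow_left]
  simp [resultantAC, eval_map_algebraMap, aeval_algebraMap_apply]

lemma rAC_irred_surj [Finite F] {p : F[X]} (hp : p.Monic) (hi : Irreducible p) (c : F) :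
    ∃ h : F[X], resultantAC p h = algebraMap F _ c := by
  have : Fact (Irreducible p) := ⟨hi⟩
  let K := AdjoinRoot p
  let pb := AdjoinRoot.powerBasis hi.ne_zero
  have : FiniteDimensional F K := pb.finite
  have : Finite K := Module.finite_of_finite F
  obtain ⟨y, hy⟩ := FiniteField.norm_surjective F K c
  obtain ⟨h, rfl⟩ := AdjoinRoot.mk_surjective y
  refine ⟨h, ?_⟩
  rw [← hy, Algebra.norm_eq_prod_embeddings F (AlgebraicClosure F)]
  have hm : minpoly F pb.gen = p := by
    rw [AdjoinRoot.powerBasis_gen, AdjoinRoot.minpoly_root hi.ne_zero, hp.leadingCoeff]; simp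
  have hs : p.Separable := PerfectField.separable_of_irreducible hi
  classical
  rw [Fintype.prod_equiv pb.liftEquiv' _
    (fun x : { y : AlgebraicClosure F // y ∈ (minpoly F pb.gen).aroots (AlgebraicClosure F) } =>
      aeval x.1 h)]
  · rw [Finset.prod_mem_multiset _ _ (fun x => aeval x h) (fun _ => rfl), Finset.prod_eq_multiset_prod, Multiset.toFinset_val, 
      Multiset.dedup_eq_self.mpr, hm]
    · simp [resultantAC, aroots_def, eval_map_algebraMap]
    · rw [hm]; exact nodup_roots hs.map
  · intro σ
    have : AdjoinRoot.mk p h = aeval pb.gen h := by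
      rw [AdjoinRoot.powerBasis_gen, AdjoinRoot.aeval_eq]
    rw [this, ← aeval_algHom_apply]
    rfl
end helpers

section counting
open Finset
variable {F : Type*} [Field F]

/-- Monic polynomials of degree `n`. -/
abbrev Mon (F : Type*) [Field F] (n : ℕ) := { p : F[X] // p.Monic ∧ p.natDegree = n }

noncomputable def monEquiv (F : Type*) [Field F] (n : ℕ) : Mon F n ≃ (Fin n → F) :=
  (monicEquivDegreeLT n).trans (degreeLTEquiv F n).toEquiv

noncomputable instance monFintype [Fintype F] (n : ℕ) : Fintype (Mon F n) := by
  classical exact Fintype.ofEquiv _ (monEquiv F n).symm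

lemma card_Mon [Fintype F] (n : ℕ) : Fintype.card (Mon F n) = Fintype.card F ^ n := by
  classical
  rw [Fintype.card_congr (monEquiv F n)]; simp

lemma mon_add_aux {n : ℕ} (φ : Mon F n) {f : F[X]} (hf : f.degree < φ.1.degree) :
    (φ.1 + f).Monic ∧ (φ.1 + f).natDegree = n :=
  ⟨φ.2.1.add_of_left hf, by rw [natDegree_add_eq_left_of_degree_lt hf, φ.2.2]⟩

/-- the monic polynomial of degree `n` congruent to `ψ * f` mod `φ`. -/
noncomputable def monMul {n : ℕ} (φ : Mon F n) (f : F[X]) (ψ : Mon F n) : Mon F n :=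
  ⟨φ.1 + (ψ.1 * f) %ₘ φ.1, mon_add_aux φ (degree_modByMonic_lt _ φ.2.1)⟩

lemma rAC_monMul {n : ℕ} (φ : Mon F n) (f : F[X]) (ψ : Mon F n) :
    resultantAC φ.1 (monMul φ f ψ).1 = resultantAC φ.1 ψ.1 * resultantAC φ.1 f := by
  rw [← rAC_mul, ← rAC_mod φ.1 (ψ.1 * f)]
  apply rAC_congr
  simp [monMul]

lemma mon_degree_sub_lt {n : ℕ} (φ ψ₁ ψ₂ : Mon F n) (h : φ.1 ∣ ψ₁.1 - ψ₂.1) : ψ₁ = ψ₂ := by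
  by_contra hne
  have hne' : ψ₁.1 - ψ₂.1 ≠ 0 := fun h0 => hne (Subtype.ext (sub_eq_zero.1 h0))
  have h1 : (ψ₁.1 - ψ₂.1).degree < ψ₁.1.degree := by
    apply degree_sub_lt_left
    · rw [degree_eq_natDegree ψ₁.2.1.ne_zero, degree_eq_natDegree ψ₂.2.1.ne_zero, ψ₁.2.2, ψ₂.2.2]
    · exact ψ₁.2.1.ne_zero
    · rw [ψ₁.2.1.leadingCoeff, ψ₂.2.1.leadingCoeff]
  have h2 := degree_le_of_dvd h hne'
  rw [degree_eq_natDegree φ.2.1.ne_zero, φ.2.2] at h2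
  rw [degree_eq_natDegree ψ₁.2.1.ne_zero, ψ₁.2.2] at h1
  exact absurd h1 (not_lt.2 h2)

lemma monMul_injective {n : ℕ} (φ : Mon F n) (f : F[X]) (hf : IsCoprime φ.1 f) :
    Function.Injective (monMul φ f) := by
  intro ψ₁ ψ₂ h
  apply mon_degree_sub_lt φ
  have h' : (ψ₁.1 * f) %ₘ φ.1 = (ψ₂.1 * f) %ₘ φ.1 := by
    have := congrArg Subtype.val h
    simpa [monMul] using this
  have : φ.1 ∣ (ψ₁.1 - ψ₂.1) * f := by
    rw [← modByMonic_eq_zero_iff_dvd φ.2.1, sub_mul, sub_modByMonic, h', sub_self]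
  exact hf.dvd_of_dvd_mul_right this

open Classical in
/-- number of `ψ` with prescribed resultant -/
noncomputable def cnt [Fintype F] {n : ℕ} (φ : Mon F n) (c : F) : ℕ :=
  #{ψ : Mon F n | resultantAC φ.1 ψ.1 = algebraMap F _ c}

open Classical in
/-- number of coprime `ψ` -/
noncomputable def cop [Fintype F] {n : ℕ} (φ : Mon F n) : ℕ :=
  #{ψ : Mon F n | IsCoprime φ.1 ψ.1}

lemma cnt_le [Fintype F] {n : ℕ} (φ : Mon F n) (f : F[X]) (r s : F) (hr : r ≠ 0)
    (hf : resultantAC φ.1 f = algebraMap F _ r) : cnt φ s ≤ cnt φ (s * r) := by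
  classical
  unfold cnt
  apply Finset.card_le_card_of_injOn (monMul φ f)
  · intro ψ hψ
    simp only [coe_filter, mem_univ, true_and, Set.mem_ofPred_eq] at hψ ⊢
    rw [rAC_monMul, hψ, hf, map_mul]
  · apply (monMul_injective φ f _).injOn
    rw [← rAC_ne_zero φ.2.1, hf]
    simpa using hr

lemma cop_eq_sum [Fintype F] {n : ℕ} (φ : Mon F n) [DecidableEq F] :
    cop φ = ∑ c ∈ univ.erase (0 : F), cnt φ c := by
  classical
  unfold cop cnt
  rw [Finset.card_eq_sum_card_fiberwise (f := fun ψ : Mon F n => resultant φ.1 ψ.1)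
    (t := univ.erase (0 : F))]
  · apply Finset.sum_congr rfl
    intro c hc
    congr 1
    ext ψ
    have hc' : c ≠ 0 := by simpa using hc
    simp only [mem_filter, mem_univ, true_and]
    rw [← rAC_ne_zero φ.2.1, ← algebraMap_resultant_eq φ.2.1]
    simp only [ne_eq, (algebraMap F (AlgebraicClosure F)).injective.eq_iff, map_eq_zero]
    constructor
    · exact fun h => h.2
    · rintro rfl; exact ⟨hc', rfl⟩
  · intro ψ hψ
    simp only [coe_filter, mem_univ, true_and, Set.mem_ofPred_eq] at hψ
    rw [← rAC_ne_zero φ.2.1, ← algebraMap_resultant_eq φ.2.1] at hψ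
    simpa using hψ

lemma cop_of_surj [Fintype F] {n : ℕ} (φ : Mon F n)
    (h : ∀ c : F, c ≠ 0 → ∃ f, resultantAC φ.1 f = algebraMap F _ c) :
    cop φ = (Fintype.card F - 1) * cnt φ 1 := by
  classical
  rw [cop_eq_sum, Finset.sum_congr rfl (g := fun _ => cnt φ 1)]
  · simp [Finset.card_erase_of_mem]
  · intro c hc
    have hc' : c ≠ 0 := by simpa using hc
    apply le_antisymm
    · obtain ⟨f, hf⟩ := h c⁻¹ (inv_ne_zero hc')
      simpa [hc'] using cnt_le φ f _ c (inv_ne_zero hc') hf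
    · obtain ⟨f, hf⟩ := h c hc'
      simpa [hc'] using cnt_le φ f _ 1 hc' hf

lemma surj_of_not_pow [Finite F] {n : ℕ} (hn : n.Prime) (φ : Mon F n)
    (hφ : ¬ ∃ a : F, φ.1 = (X - C a) ^ n) (c : F) (hc : c ≠ 0) :
    ∃ f, resultantAC φ.1 f = algebraMap F _ c := by
  obtain ⟨φ, hm, hd⟩ := φ
  simp only at hφ ⊢
  have hnu : ¬ IsUnit φ := by
    intro hu
    have := natDegree_eq_zero_of_isUnit hu
    exact hn.ne_zero (hd ▸ this)
  obtain ⟨p, hpm, hpi, hpd⟩ := exists_monic_irreducible_factor φ hnu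
  have hfin : FiniteMultiplicity p φ := FiniteMultiplicity.of_not_isUnit hpi.not_isUnit hm.ne_zero
  obtain ⟨g, hg, hpg⟩ := hfin.exists_eq_pow_mul_and_not_dvd
  set e := multiplicity p φ with he
  have he1 : e ≠ 0 := by
    intro h0
    apply hpg
    rw [h0, pow_zero, one_mul] at hg
    rwa [← hg]
  have hg0 : g ≠ 0 := by rintro rfl; simp at hpg
  have hgm : g.Monic := (hpm.pow e).of_mul_monic_left (hg ▸ hm)
  have hdeg : e * p.natDegree + g.natDegree = n := by
    rw [← hd, hg, natDegree_mul (pow_ne_zero _ hpi.ne_zero) hg0, natDegree_pow]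
  have hp1 : 0 < p.natDegree := hpi.natDegree_pos
  have hen : e < n := by
    have hle : e ≤ n := by nlinarith
    refine lt_of_le_of_ne hle fun hen => hφ ?_
    have hn0 := hn.pos
    have hp2 : p.natDegree = 1 := by
      rw [hen] at hdeg
      nlinarith
    have hg2 : g.natDegree = 0 := by rw [hen, hp2] at hdeg; omega
    have hg3 : g = 1 := hgm.natDegree_eq_zero.mp hg2
    refine ⟨-p.coeff 0, ?_⟩
    rw [hg, hg3, mul_one, hen]
    congr 1
    have := hpm.eq_X_add_C hp2
    rw [C_neg, sub_neg_eq_add]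
    exact this
  have hcop : IsCoprime p g := (hpi.coprime_iff_not_dvd).2 hpg
  have hcop' : Nat.Coprime e n :=
    Nat.Coprime.symm ((Nat.Prime.coprime_iff_not_dvd hn).2 fun hdvd =>
      absurd (Nat.le_of_dvd (Nat.pos_of_ne_zero he1) hdvd) (not_le.2 hen))
  have hbez := Nat.gcd_eq_gcd_ab e n
  rw [hcop'.gcd_eq_one] at hbez
  obtain ⟨h, hh⟩ := rAC_irred_surj hpm hpi (c ^ (Nat.gcdA e n))
  obtain ⟨a, b, hab⟩ := hcop
  refine ⟨(h * (b * g) + a * p) * C (c ^ (Nat.gcdB e n)), ?_⟩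
  rw [rAC_mul, rAC_C hm, hd]
  conv_lhs => rw [hg]
  rw [rAC_mul_left (pow_ne_zero _ hpi.ne_zero) hg0, rAC_pow_left]
  have e1 : resultantAC p (h * (b * g) + a * p) = resultantAC p h := by
    apply rAC_congr
    exact ⟨a - h * a, by linear_combination h * hab⟩
  have e2 : resultantAC g (h * (b * g) + a * p) = resultantAC g 1 := by
    apply rAC_congr
    exact ⟨h * b - b, by linear_combination hab⟩
  have e3 : resultantAC g 1 = 1 := by simp [resultantAC]
  rw [e1, e2, e3, hh, mul_one, ← map_pow, ← map_mul]
  congr 1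
  rw [← zpow_natCast, ← zpow_natCast, ← zpow_mul, ← zpow_mul, ← zpow_add₀ hc, mul_comm _ (e : ℤ),
    mul_comm _ (n : ℤ), ← hbez]
  simp

lemma card_eval_eq [Fintype F] [DecidableEq F] (n : ℕ) (a c : F) :
    #{ψ : Mon F (n + 1) | ψ.1.eval a = c} = Fintype.card F ^ n := by
  rw [← card_Mon, ← Finset.card_univ]
  symm
  have hd : ∀ g : Mon F n, (C c).degree < ((X - C a) * g.1).degree := by
    intro g
    refine lt_of_le_of_lt degree_C_le ?_
    rw [degree_mul, degree_X_sub_C, degree_eq_natDegree g.2.1.ne_zero]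
    norm_cast
    omega
  have hm : ∀ g : Mon F n, ((X - C a) * g.1).Monic := fun g => (monic_X_sub_C a).mul g.2.1
  have hn : ∀ g : Mon F n, ((X - C a) * g.1).natDegree = n + 1 := by
    intro g
    rw [(monic_X_sub_C a).natDegree_mul g.2.1, natDegree_X_sub_C, g.2.2, add_comm]
  refine Finset.card_bij
    (fun g _ => ⟨(X - C a) * g.1 + C c, (mon_add_aux ⟨_, hm g, hn g⟩ (hd g))⟩) ?_ ?_ ?_
  · intro g _
    simp
  · intro g _ g' _ h
    have h' := congrArg Subtype.val h
    simp only [add_left_inj] at h'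
    exact Subtype.ext (mul_left_cancel₀ (X_sub_C_ne_zero a) h')
  · intro ψ hψ
    simp only [mem_filter, mem_univ, true_and] at hψ
    have h1 := modByMonic_add_div ψ.1 (X - C a)
    rw [modByMonic_X_sub_C_eq_C_eval, hψ] at h1
    refine ⟨⟨ψ.1 /ₘ (X - C a), ?_, ?_⟩, mem_univ _, ?_⟩
    · rw [Monic, leadingCoeff_divByMonic_X_sub_C, ψ.2.1.leadingCoeff]
      rw [degree_eq_natDegree ψ.2.1.ne_zero, ψ.2.2]
      norm_cast
    · rw [natDegree_divByMonic _ (monic_X_sub_C a), ψ.2.2, natDegree_X_sub_C]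
      rfl
    · apply Subtype.ext
      simp only
      rw [add_comm]; exact h1

lemma card_roots_unity [Fintype F] [DecidableEq F] {n : ℕ} (hn : n.Prime)
    (h : n ∣ Fintype.card F - 1) : #{c : F | c ^ n = 1} = n := by
  have : Fact n.Prime := ⟨hn⟩
  rw [← Fintype.card_units] at h
  obtain ⟨ζ, hζ⟩ := exists_prime_orderOf_dvd_card n h
  have hp : IsPrimitiveRoot (ζ : F) n := by
    rw [IsPrimitiveRoot.coe_units_iff]
    exact hζ ▸ IsPrimitiveRoot.orderOf ζ
  refine Eq.trans ?_ hp.card_nthRootsFinset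
  congr 1
  ext c
  simp [mem_nthRootsFinset hn.pos]

lemma cnt_pow [Fintype F] {n : ℕ} (hn : n.Prime) (h : n ∣ Fintype.card F - 1)
    (φ : Mon F n) (a : F) (hφ : φ.1 = (X - C a) ^ n) :
    cnt φ 1 = n * Fintype.card F ^ (n - 1) := by
  classical
  unfold cnt
  obtain ⟨m, rfl⟩ : ∃ m, n = m + 1 := ⟨n - 1, by have := hn.pos; omega⟩
  rw [Finset.card_eq_sum_card_fiberwise (f := fun ψ : Mon F (m + 1) => ψ.1.eval a)
    (t := {c : F | c ^ (m + 1) = 1})]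
  · rw [Finset.sum_congr rfl (g := fun _ => Fintype.card F ^ m)]
    · rw [Finset.sum_const, card_roots_unity hn h]; simp
    · intro c hc
      rw [← card_eval_eq m a c]
      congr 1
      ext ψ
      simp only [mem_filter, mem_univ, true_and] at hc ⊢
      rw [hφ, rAC_X_sub_C_pow, (algebraMap F (AlgebraicClosure F)).injective.eq_iff]
      constructor
      · exact fun h => h.2
      · rintro rfl; exact ⟨hc, rfl⟩
  · intro ψ hψ
    simp only [coe_filter, mem_univ, true_and, Set.mem_ofPred_eq] at hψ ⊢
    rwa [hφ, rAC_X_sub_C_pow, (algebraMap F (AlgebraicClosure F)).injective.eq_iff] at hψ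

lemma cop_pow [Fintype F] {n : ℕ} (hn : n ≠ 0)
    (φ : Mon F n) (a : F) (hφ : φ.1 = (X - C a) ^ n) :
    cop φ = (Fintype.card F - 1) * Fintype.card F ^ (n - 1) := by
  classical
  unfold cop
  obtain ⟨m, rfl⟩ : ∃ m, n = m + 1 := ⟨n - 1, by omega⟩
  have key : ∀ ψ : Mon F (m + 1), IsCoprime φ.1 ψ.1 ↔ ψ.1.eval a ≠ 0 := by
    intro ψ
    rw [← rAC_ne_zero φ.2.1, hφ, rAC_X_sub_C_pow]
    simp
  simp only [key]
  rw [Finset.card_eq_sum_card_fiberwise (f := fun ψ : Mon F (m + 1) => ψ.1.eval a)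
    (t := univ.erase (0 : F))]
  · rw [Finset.sum_congr rfl (g := fun _ => Fintype.card F ^ m)]
    · rw [Finset.sum_const]; simp [Finset.card_erase_of_mem]
    · intro c hc
      have hc' : c ≠ 0 := by simpa using hc
      rw [← card_eval_eq m a c]
      congr 1
      ext ψ
      simp only [mem_filter, mem_univ, true_and]
      constructor
      · exact fun h => h.2
      · rintro rfl; exact ⟨hc', rfl⟩
  · intro ψ hψ
    simpa using hψ

/-- Coprime pairs. -/
abbrev CopP (F : Type*) [Field F] (n : ℕ) :=
  { p : Mon F n × Mon F n // IsCoprime p.1.1 p.2.1 }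

noncomputable instance [Fintype F] (n : ℕ) : Fintype (CopP F n) := Fintype.ofFinite _

lemma mon_mul_aux {n k : ℕ} (hk : k ≤ n) (d : Mon F k) (a : Mon F (n - k)) :
    (d.1 * a.1).Monic ∧ (d.1 * a.1).natDegree = n :=
  ⟨d.2.1.mul a.2.1, by rw [d.2.1.natDegree_mul a.2.1, d.2.2, a.2.2]; omega⟩

noncomputable def gcdMap (n : ℕ) :
    (Σ k : Fin (n + 1), Mon F k × CopP F (n - k)) → Mon F n × Mon F n :=
  fun x => (⟨x.2.1.1 * x.2.2.1.1.1, mon_mul_aux (Nat.lt_succ_iff.1 x.1.2) _ _⟩,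
    ⟨x.2.1.1 * x.2.2.1.2.1, mon_mul_aux (Nat.lt_succ_iff.1 x.1.2) _ _⟩)

lemma dvd_aux {d d' a b a' b' : F[X]} (h : IsCoprime a b) (h1 : d * a = d' * a')
    (h2 : d * b = d' * b') : d' ∣ d := by
  obtain ⟨u, v, huv⟩ := h
  exact ⟨u * a' + v * b', by linear_combination (-d) * huv + u * h1 + v * h2⟩

lemma gcdMap_bijective (n : ℕ) : Function.Bijective (gcdMap (F := F) n) := by
  constructor
  · rintro ⟨⟨k, hk⟩, d, ⟨⟨a, b⟩, hab⟩⟩ ⟨⟨k', hk'⟩, d', ⟨⟨a', b'⟩, hab'⟩⟩ h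
    have h1 : d.1 * a.1 = d'.1 * a'.1 := congrArg (fun z => z.1.1) h
    have h2 : d.1 * b.1 = d'.1 * b'.1 := congrArg (fun z => z.2.1) h
    have hd : d.1 = d'.1 := eq_of_monic_of_associated d.2.1 d'.2.1
      (associated_of_dvd_dvd (dvd_aux hab' h1.symm h2.symm) (dvd_aux hab h1 h2))
    have hkk : k = k' := by
      have e1 := d.2.2
      have e2 := d'.2.2
      rw [← hd, e1] at e2
      exact e2
    subst hkk
    have hd' : d = d' := Subtype.ext hd
    subst hd'
    have ha : a = a' := Subtype.ext (mul_left_cancel₀ d.2.1.ne_zero h1)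
    have hb : b = b' := Subtype.ext (mul_left_cancel₀ d.2.1.ne_zero h2)
    subst ha hb
    rfl
  · rintro ⟨φ, ψ⟩
    classical
    set d := normalize (EuclideanDomain.gcd φ.1 ψ.1) with hd
    have hg0 : EuclideanDomain.gcd φ.1 ψ.1 ≠ 0 := fun h0 =>
      φ.2.1.ne_zero (EuclideanDomain.gcd_eq_zero_iff.1 h0).1
    have hdm : d.Monic := monic_normalize hg0
    have hass : Associated d (EuclideanDomain.gcd φ.1 ψ.1) := normalize_associated _
    obtain ⟨a, ha⟩ : d ∣ φ.1 := hass.dvd.trans (EuclideanDomain.gcd_dvd_left _ _)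
    obtain ⟨b, hb⟩ : d ∣ ψ.1 := hass.dvd.trans (EuclideanDomain.gcd_dvd_right _ _)
    have ham : a.Monic := hdm.of_mul_monic_left (ha ▸ φ.2.1)
    have hbm : b.Monic := hdm.of_mul_monic_left (hb ▸ ψ.2.1)
    have hda : d.natDegree + a.natDegree = n := by
      rw [← hdm.natDegree_mul ham, ← ha, φ.2.2]
    have hdb : d.natDegree + b.natDegree = n := by
      rw [← hdm.natDegree_mul hbm, ← hb, ψ.2.2]
    have hcop : IsCoprime a b := by
      obtain ⟨k, hk⟩ : ∃ k, d = EuclideanDomain.gcd φ.1 ψ.1 * k := hass.dvd'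
      have hbz := EuclideanDomain.gcd_eq_gcd_ab φ.1 ψ.1
      refine ⟨EuclideanDomain.gcdA φ.1 ψ.1 * k, EuclideanDomain.gcdB φ.1 ψ.1 * k, ?_⟩
      apply mul_left_cancel₀ hdm.ne_zero
      rw [hbz] at hk
      generalize EuclideanDomain.gcdA φ.1 ψ.1 = u at *
      generalize EuclideanDomain.gcdB φ.1 ψ.1 = v at *
      rw [mul_one]
      nth_rewrite 2 [hk]
      linear_combination (-u * k) * ha + (-v * k) * hb
    refine ⟨⟨⟨d.natDegree, by omega⟩, ⟨d, hdm, rfl⟩,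
      ⟨⟨⟨a, ham, ?_⟩, ⟨b, hbm, ?_⟩⟩, hcop⟩⟩, ?_⟩
    · simp only; omega
    · simp only; omega
    · apply Prod.ext
      · exact Subtype.ext ha.symm
      · exact Subtype.ext hb.symm

lemma sum_CopP [Fintype F] (n : ℕ) :
    ∑ k ∈ range (n + 1), Fintype.card F ^ k * Fintype.card (CopP F (n - k)) =
      Fintype.card F ^ (2 * n) := by
  have h := Fintype.card_of_bijective (gcdMap_bijective (F := F) n)
  rw [Fintype.card_sigma, Fintype.card_prod, card_Mon, ← pow_add, ← two_mul] at h
  rw [← h, Finset.sum_range]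
  apply Finset.sum_congr rfl
  intro k _
  rw [Fintype.card_prod, card_Mon]

lemma card_CopP [Fintype F] (m : ℕ) :
    Fintype.card (CopP F (m + 1)) + Fintype.card F ^ (2 * m + 1) =
      Fintype.card F ^ (2 * (m + 1)) := by
  have h1 := sum_CopP (F := F) (m + 1)
  have h2 := sum_CopP (F := F) m
  rw [Finset.sum_range_succ'] at h1
  rw [← h1, pow_succ, ← h2, Finset.sum_mul, add_comm]
  congr 1
  · apply Finset.sum_congr rfl
    intro k _
    rw [Nat.add_sub_add_right]; ring
  · simp

lemma sum_cop [Fintype F] (n : ℕ) : ∑ φ : Mon F n, cop φ = Fintype.card (CopP F n) := by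
  classical
  unfold cop
  rw [← Finset.card_sigma, ← Fintype.card_coe]
  apply Fintype.card_congr
  exact
    { toFun := fun x => ⟨(x.1.1, x.1.2), by
        have := (Finset.mem_sigma.1 x.2).2; exact (Finset.mem_filter.1 this).2⟩
      invFun := fun x => ⟨⟨x.1.1, x.1.2⟩, by simpa using x.2⟩
      left_inv := fun x => rfl
      right_inv := fun x => rfl }

lemma card_ResPairs [Fintype F] (n : ℕ) :
    Nat.card (ResPairs F n) = ∑ φ : Mon F n, cnt φ 1 := by
  classical
  unfold cnt
  rw [← Finset.card_sigma, ← Fintype.card_coe, ← Nat.card_eq_fintype_card]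
  apply Nat.card_congr
  exact
    { toFun := fun x => ⟨⟨⟨x.1.1, x.2.1, x.2.2.1⟩, ⟨x.1.2, x.2.2.2.1, x.2.2.2.2.1⟩⟩, by
        have := x.2.2.2.2.2; simpa using this⟩
      invFun := fun x => ⟨(x.1.1.1, x.1.2.1), x.1.1.2.1, x.1.1.2.2, x.1.2.2.1, x.1.2.2.2, by
        have := (Finset.mem_filter.1 (Finset.mem_sigma.1 x.2).2).2; simpa using this⟩
      left_inv := fun x => rfl
      right_inv := fun x => rfl }

lemma card_pow_set [Fintype F] {n : ℕ} (hn : n ≠ 0) [DecidablePred fun φ : Mon F n => ∃ a : F, φ.1 = (X - C a) ^ n] :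
    #{φ : Mon F n | ∃ a : F, φ.1 = (X - C a) ^ n} = Fintype.card F := by
  symm
  rw [← Finset.card_univ]
  refine Finset.card_bij (fun a _ => ⟨(X - C a) ^ n, (monic_X_sub_C a).pow n, by simp⟩) ?_ ?_ ?_
  · intro a _
    simp only [mem_filter, mem_univ, true_and]
    exact ⟨a, rfl⟩
  · intro a _ b _ h
    have h' : (X - C a) ^ n = (X - C b) ^ n := congrArg Subtype.val h
    have := congrArg (eval a) h'
    rw [eval_pow, eval_pow] at this
    simp only [eval_sub, eval_X, eval_C, sub_self, zero_pow hn] at this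
    exact sub_eq_zero.1 (pow_eq_zero_iff hn |>.1 this.symm)
  · rintro φ hφ
    simp only [mem_filter, mem_univ, true_and] at hφ
    obtain ⟨a, ha⟩ := hφ
    exact ⟨a, mem_univ _, Subtype.ext ha.symm⟩

end counting

/-- for `n` prime and `q ≡ 1 (mod n)`,
`|Res_n(F_q)| = q^{2n-1} + (n-1)·qⁿ`. -/
theorem stmt_5 (F : Type*) [Field F] [Fintype F] (q : ℕ) (hq : Fintype.card F = q)
    (n : ℕ) (hp : n.Prime) (hmod : n ∣ (q - 1)) :
    Nat.card (ResPairs F n) = q ^ (2 * n - 1) + (n - 1) * q ^ n := by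
  classical
  subst hq
  rw [card_ResPairs]
  have hq1 : 1 < Fintype.card F := Fintype.one_lt_card
  have key : ∀ φ : Mon F n, (Fintype.card F - 1) * cnt φ 1 = cop φ +
      if (∃ a : F, φ.1 = (X - C a) ^ n) then
        (Fintype.card F - 1) * ((n - 1) * Fintype.card F ^ (n - 1)) else 0 := by
    intro φ
    split_ifs with h
    · obtain ⟨a, ha⟩ := h
      rw [cnt_pow hp hmod φ a ha, cop_pow hp.ne_zero φ a ha, ← mul_add]
      congr 1
      obtain ⟨m, rfl⟩ : ∃ m, n = m + 1 := ⟨n - 1, by have := hp.pos; omega⟩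
      simp only [Nat.add_sub_cancel]
      ring
    · rw [cop_of_surj φ (surj_of_not_pow hp φ h), add_zero]
  apply Nat.eq_of_mul_eq_mul_left (Nat.sub_pos_of_lt hq1)
  rw [Finset.mul_sum, Finset.sum_congr rfl (fun φ _ => key φ), Finset.sum_add_distrib, sum_cop,
    ← Finset.sum_filter, Finset.sum_const, card_pow_set hp.ne_zero]
  obtain ⟨m, rfl⟩ : ∃ m, n = m + 1 := ⟨n - 1, by have := hp.pos; omega⟩
  have hc := card_CopP (F := F) m
  obtain ⟨r, hr⟩ : ∃ r, Fintype.card F = r + 1 := ⟨Fintype.card F - 1, by omega⟩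
  rw [hr] at hc ⊢
  have e : 2 * (m + 1) - 1 = 2 * m + 1 := by omega
  rw [e]
  simp only [Nat.add_sub_cancel, smul_eq_mul]
  have hc' : Fintype.card (CopP F (m + 1)) = r * (r + 1) ^ (2 * m + 1) := by
    have : (r + 1) ^ (2 * (m + 1)) = r * (r + 1) ^ (2 * m + 1) + (r + 1) ^ (2 * m + 1) := by ring
    omega
  rw [hc']
  ring
end
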